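/- Let m ∈ ℤ and ν ∈ ℂ with Re(ν) + m > 0. Let d ∈ (0, π/2) and let x ∈ ℂ with Re(x) > 0 and Re(x·e^{id}) > 0. Then the integral below (over the ray t = r·e^{id}, r > 0) converges absolutely and ∫_0^∞ [θ(q, −q^m·e^{−id}/r) / ((e^{−id}/r;q)_∞)] · exp(−x·r·e^{id}) · exp(ν·(ln r + id)) · dr/r = (−1)^m·(q;q)_∞·q^{−m(m−1)/2}·Γ(m+ν) · x^{−(m+ν)} · G(m+ν; q, 1/x). -/

import Mathlib

/-!
By the Jacobi triple product, `θ(q,-s) = (q;q)_∞ (s;q)_∞ (q/s;q)_∞`, and by quasi-periodicity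
`θ(q, q^m y) = q^{-m(m-1)/2} y^{-m} θ(q,y)`. With `s = 1/t` the denominator `(1/t;q)_∞` cancels
(it does not vanish because the ray avoids the real axis), and the kernel of the integral is just
`(-1)^m q^{-m(m-1)/2} (q;q)_∞ t^m (qt;q)_∞` (`kernel_eq`). Expanding `(qt;q)_∞` by Euler's formula
(`hasSum_qPochInf_q_mul`) and integrating term by term, the `n`-th term gives a Gamma integral of
value `x^{-(m+ν+n)} Γ(m+ν+n) = x^{-(m+ν+n)} (m+ν)_n Γ(m+ν)`; the sum is the series `G`.
The interchange is legitimate because the integrals of the absolute values are summable: the factor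
`q^{n(n+1)/2}` beats `Γ(Re(m+ν)+n)` (`summable_eulerCoeff_Gamma`).

Both the triple product and Euler's expansion are limits, by dominated convergence for series, of one
finite two-parameter identity (`finite_triple_product`). The Gamma integral along a complex
direction (`intgamma_complex`) follows from the real one by analytic continuation in the right
half-plane.
-/

/-- `(a;c)_n = ∏_{j=0}^{n-1} (1 - a c^j)`. -/
noncomputable def qPoch (a c : ℂ) (n : ℕ) : ℂ := ∏ j ∈ Finset.range n, (1 - a * c ^ j)

/-- `(a;c)_∞ = ∏_{j=0}^{∞} (1 - a c^j)`. -/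
noncomputable def qPochInf (a c : ℂ) : ℂ := ∏' j : ℕ, (1 - a * c ^ j)

/-- `q^μ := exp (μ log q)` for real `q > 0` and complex `μ`. -/
noncomputable def qpow (q : ℝ) (μ : ℂ) : ℂ := Complex.exp (μ * Real.log q)

/-- `F(μ;q,x) = Σ_{n≥0} ((q^μ;q)_n / n!) (-x)^n`. -/
noncomputable def F (μ : ℂ) (q : ℝ) (x : ℂ) : ℂ :=
  ∑' n : ℕ, qPoch (qpow q μ) (q : ℂ) n / (Nat.factorial n : ℂ) * (-x) ^ n

/-- `(a)_n = a (a+1) ⋯ (a+n-1)`. -/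
noncomputable def poch (a : ℂ) (n : ℕ) : ℂ := ∏ j ∈ Finset.range n, (a + (j : ℂ))

/-- `G(a;q,x) = Σ_{n≥0} ((a)_n q^{n(n+1)/2} / (q;q)_n) (-x)^n`. -/
noncomputable def G (a : ℂ) (q : ℝ) (x : ℂ) : ℂ :=
  ∑' n : ℕ, poch a n * (q : ℂ) ^ (n * (n + 1) / 2) / qPoch (q : ℂ) (q : ℂ) n * (-x) ^ n

/-- Jacobi theta function `θ(p,x) = Σ_{n∈ℤ} p^{n(n-1)/2} x^n`. -/
noncomputable def theta (p : ℝ) (x : ℂ) : ℂ :=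
  ∑' n : ℤ, (p : ℂ) ^ (n * (n - 1) / 2) * x ^ n

open Filter Topology

/-! ### The finite triple product -/

/-- Ratio test when the quotient of consecutive terms tends to `0`; the terms may vanish. -/
lemma summable_of_ratio_zero {𝕜 : Type*} [NormedField 𝕜] [CompleteSpace 𝕜] {f c : ℕ → 𝕜}
    (h : ∀ n, f (n + 1) = c n * f n) (hc : Tendsto c atTop (𝓝 0)) : Summable f := by
  refine summable_of_ratio_norm_eventually_le (r := 1 / 2) (by norm_num) ?_
  have h1 : ∀ᶠ n in atTop, ‖c n‖ < 1 / 2 :=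
    hc.norm.eventually (gt_mem_nhds (by norm_num))
  filter_upwards [h1] with n hn
  rw [h, norm_mul]
  gcongr

/-- The weight `q^{N(N-1)/2}`, `N ∈ ℤ`, of the theta series. -/
noncomputable def thetaWt (q : ℝ) (N : ℤ) : ℂ := (q : ℂ) ^ (N * (N - 1) / 2)

/-- `1 / (q;q)_N` for `N ∈ ℤ`, with the usual convention that it vanishes for `N < 0`. -/
noncomputable def invPoch (q : ℝ) (N : ℤ) : ℂ :=
  if 0 ≤ N then (qPoch (q : ℂ) (q : ℂ) N.toNat)⁻¹ else 0

/-- `(N+M)(N+M-1)/2 = N(N-1)/2 + M(M-1)/2 + MN`; the integer divisions are exact. -/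
lemma thetaWt_add {q : ℝ} (hq : 0 < q) (N M : ℤ) :
    thetaWt q (N + M) = thetaWt q N * thetaWt q M * ((q : ℂ) ^ M) ^ N := by
  have hq' : (q : ℂ) ≠ 0 := by exact_mod_cast hq.ne'
  unfold thetaWt
  rw [← zpow_mul, ← zpow_add₀ hq', ← zpow_add₀ hq']
  congr 1
  obtain ⟨a, ha⟩ := (Int.even_mul_pred_self N).two_dvd
  obtain ⟨b, hb⟩ := (Int.even_mul_pred_self M).two_dvd
  have hc : (N + M) * (N + M - 1) = 2 * (a + b + M * N) := by
    linear_combination ha + hb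
  rw [ha, hb, hc]
  simp

lemma thetaWt_succ {q : ℝ} (hq : 0 < q) (N : ℤ) :
    thetaWt q (N + 1) = thetaWt q N * (q : ℂ) ^ N := by
  rw [thetaWt_add hq]
  simp [thetaWt]

lemma thetaWt_ne_zero {q : ℝ} (hq : 0 < q) (N : ℤ) : thetaWt q N ≠ 0 :=
  zpow_ne_zero _ (by exact_mod_cast hq.ne')

lemma one_sub_pow_ne_zero {q : ℝ} (hq0 : 0 < q) (hq1 : q < 1) (n : ℕ) :
    1 - (q : ℂ) ^ (n + 1) ≠ 0 := by
  have : q ^ (n + 1) < 1 := pow_lt_one₀ hq0.le hq1 (by simp)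
  have h : (1 - q ^ (n + 1) : ℝ) ≠ 0 := by linarith
  exact_mod_cast h

lemma qPoch_succ (a c : ℂ) (n : ℕ) : qPoch a c (n + 1) = qPoch a c n * (1 - a * c ^ n) :=
  Finset.prod_range_succ _ _

lemma qPoch_self_succ (q : ℝ) (n : ℕ) :
    qPoch (q : ℂ) (q : ℂ) (n + 1) = qPoch (q : ℂ) (q : ℂ) n * (1 - (q : ℂ) ^ (n + 1)) := by
  rw [qPoch_succ, pow_succ']

lemma qPoch_self_ne_zero {q : ℝ} (hq0 : 0 < q) (hq1 : q < 1) (n : ℕ) :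
    qPoch (q : ℂ) (q : ℂ) n ≠ 0 := by
  refine Finset.prod_ne_zero_iff.2 fun j _ => ?_
  rw [← pow_succ']
  exact one_sub_pow_ne_zero hq0 hq1 j

/-- The recursion of `1 / (q;q)_N` holds for every integer `N`, including `N = 0`, where both sides
vanish. -/
lemma invPoch_rec {q : ℝ} (hq0 : 0 < q) (hq1 : q < 1) (N : ℤ) :
    invPoch q (N - 1) = (1 - (q : ℂ) ^ N) * invPoch q N := by
  rcases lt_trichotomy N 0 with h | rfl | h
  · rw [invPoch, invPoch, if_neg (by lia), if_neg (by lia), mul_zero]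
  · simp [invPoch]
  · obtain ⟨n, rfl⟩ : ∃ n : ℕ, N = (n : ℤ) + 1 := ⟨(N - 1).toNat, by lia⟩
    rw [invPoch, invPoch, if_pos (by lia), if_pos (by lia)]
    have h1 : ((n : ℤ) + 1 - 1).toNat = n := by lia
    have h2 : ((n : ℤ) + 1).toNat = n + 1 := by lia
    rw [h1, h2, qPoch_self_succ]
    have := one_sub_pow_ne_zero hq0 hq1 n
    have := qPoch_self_ne_zero hq0 hq1 n
    have h3 : (q : ℂ) ^ ((n : ℤ) + 1) = (q : ℂ) ^ (n + 1) := by norm_cast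
    rw [h3]
    field_simp

/-- A finite form of the Jacobi triple product. Taking `b = 0` gives the `q`-binomial theorem,
hence Euler's expansion of `(-z;q)_∞` in the limit `a → ∞`, while `a = b → ∞` gives the triple
product itself. -/
lemma finite_triple_product {q : ℝ} (hq0 : 0 < q) (hq1 : q < 1) {z : ℂ} (hz : z ≠ 0) (a b : ℕ) :
    HasSum (fun N : ℤ => invPoch q (b + N) * invPoch q (a - N) * (thetaWt q N * z ^ N))
      (qPoch (-z) q a * qPoch (-(q / z)) q b / qPoch (q : ℂ) (q : ℂ) (a + b)) := by
  have hq' : (q : ℂ) ≠ 0 := by exact_mod_cast hq0.ne'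
  induction a with
  | zero =>
    induction b with
    | zero =>
      have := hasSum_single (f := fun N : ℤ => invPoch q ((0 : ℕ) + N) * invPoch q ((0 : ℕ) - N) *
        (thetaWt q N * z ^ N)) 0 (fun N hN => by
          rcases lt_or_gt_of_ne hN with h | h
          · simp [invPoch, h.not_ge]
          · simp [invPoch, h.not_ge])
      simpa [invPoch, qPoch, thetaWt] using this
    | succ b ih =>
      -- multiplying by `1 + q^{b+1}/z` adds a shifted copy of the series
      have h1 := ((Equiv.addRight (1 : ℤ)).hasSum_iff.2 ih).mul_left ((q : ℂ) ^ (b + 1) / z)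
      have h2 := (ih.add h1).div_const (1 - (q : ℂ) ^ (b + 1))
      convert! h2 using 1
      · funext N
        rw [eq_div_iff (one_sub_pow_ne_zero hq0 hq1 b)]
        simp only [Function.comp_apply, Equiv.coe_addRight]
        have e1 : invPoch q (b + N)
            = (1 - (q : ℂ) ^ ((b + 1 : ℕ) + N : ℤ)) * invPoch q ((b + 1 : ℕ) + N) := by
          rw [← invPoch_rec hq0 hq1]; congr 1; push_cast; ring
        have e2 : invPoch q (b + (N + 1)) = invPoch q ((b + 1 : ℕ) + N) := by
          congr 1; push_cast; ring
        have e3 : invPoch q ((0 : ℕ) - (N + 1))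
            = (1 - (q : ℂ) ^ ((0 : ℕ) - N : ℤ)) * invPoch q ((0 : ℕ) - N) := by
          rw [← invPoch_rec hq0 hq1]; congr 1; ring
        rw [e1, e2, e3, thetaWt_succ hq0, zpow_add₀ hz, zpow_add₀ hq', zpow_sub₀ hq', zpow_natCast]
        have hx := zpow_ne_zero N hq'
        simp
        field_simp
        ring
      · have h3 := one_sub_pow_ne_zero hq0 hq1 b
        have h4 := qPoch_self_ne_zero hq0 hq1 b
        rw [zero_add, zero_add, qPoch_self_succ, qPoch_succ _ _ b]
        field_simp
        ring
  | succ a ih =>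
    -- multiplying by `1 + z q^a` adds a copy of the series shifted the other way
    have h1 := ((Equiv.subRight (1 : ℤ)).hasSum_iff.2 ih).mul_left (z * (q : ℂ) ^ a)
    have h2 := (ih.add h1).div_const (1 - (q : ℂ) ^ (a + b + 1))
    convert! h2 using 1
    · funext N
      rw [eq_div_iff (one_sub_pow_ne_zero hq0 hq1 _)]
      simp only [Function.comp_apply, Equiv.subRight_apply]
      have e1 : invPoch q (a - N)
          = (1 - (q : ℂ) ^ ((a : ℤ) - (N - 1) : ℤ)) * invPoch q ((a + 1 : ℕ) - N) := by
        have : ((a : ℤ) - (N - 1) : ℤ) = (a + 1 : ℕ) - N := by push_cast; ring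
        rw [this, ← invPoch_rec hq0 hq1]; congr 1; push_cast; ring
      have e2 : invPoch q (a - (N - 1)) = invPoch q ((a + 1 : ℕ) - N) := by
        congr 1; push_cast; ring
      have e3 : invPoch q (b + (N - 1))
          = (1 - (q : ℂ) ^ (b + (1 + (N - 1)) : ℤ)) * invPoch q (b + N) := by
        have : (b + (1 + (N - 1)) : ℤ) = b + N := by ring
        rw [this, ← invPoch_rec hq0 hq1]; congr 1; ring
      have e4 : thetaWt q N = thetaWt q (N - 1) * (q : ℂ) ^ (N - 1) := by
        rw [← thetaWt_succ hq0]; congr 1; ring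
      have e5 : z ^ N = z ^ (N - 1) * z := by
        rw [← zpow_add_one₀ hz]; congr 1; ring
      rw [e1, e2, e3, e4, e5, zpow_sub₀ hq' (a : ℤ), zpow_add₀ hq' (b : ℤ), zpow_add₀ hq' 1,
        zpow_natCast, zpow_natCast, zpow_one]
      have hx := zpow_ne_zero (N - 1) hq'
      field_simp
      ring
    · have h3 := one_sub_pow_ne_zero hq0 hq1 (a + b)
      have h4 := qPoch_self_ne_zero hq0 hq1 (a + b)
      rw [show a + 1 + b = a + b + 1 by ring, qPoch_self_succ, qPoch_succ _ _ a]
      field_simp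
      ring

/-! ### The triple product and Euler's expansion -/

lemma summable_theta {q : ℝ} (hq0 : 0 < q) (hq1 : q < 1) {z : ℂ} (hz : z ≠ 0) :
    Summable (fun N : ℤ => thetaWt q N * z ^ N) := by
  have hq' : (q : ℂ) ≠ 0 := by exact_mod_cast hq0.ne'
  have hpow : Tendsto (fun n : ℕ => (q : ℂ) ^ n) atTop (𝓝 0) :=
    tendsto_pow_atTop_nhds_zero_of_norm_lt_one (by simpa [abs_of_pos hq0] using hq1)
  refine Summable.of_nat_of_neg ?_ ?_
  · refine summable_of_ratio_zero (c := fun n => (q : ℂ) ^ n * z) (fun n => ?_)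
      (by simpa using hpow.mul_const z)
    push_cast
    rw [thetaWt_succ hq0, zpow_add_one₀ hz, zpow_natCast]
    ring
  · refine summable_of_ratio_zero (c := fun n => (q : ℂ) ^ (n + 1) * z⁻¹) (fun n => ?_)
      (by simpa using ((tendsto_add_atTop_iff_nat 1).2 hpow).mul_const z⁻¹)
    have e1 : thetaWt q (-(n : ℤ)) = thetaWt q (-((n + 1 : ℕ) : ℤ)) * (q : ℂ) ^ (-((n + 1 : ℕ) : ℤ)) := by
      rw [← thetaWt_succ hq0]; congr 1; push_cast; ring
    have e2 : z ^ (-(n : ℤ)) = z ^ (-((n + 1 : ℕ) : ℤ)) * z := by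
      rw [← zpow_add_one₀ hz]; congr 1; push_cast; ring
    rw [e1, e2, zpow_neg (q : ℂ), zpow_natCast]
    field_simp

lemma summable_qPoch_factor {q : ℝ} (hq0 : 0 < q) (hq1 : q < 1) (a : ℂ) :
    Summable fun j : ℕ => ‖-(a * (q : ℂ) ^ j)‖ := by
  simp only [norm_neg, norm_mul, norm_pow, Complex.norm_real, Real.norm_of_nonneg hq0.le]
  exact (summable_geometric_of_lt_one hq0.le hq1).mul_left _

lemma tendsto_qPoch {q : ℝ} (hq0 : 0 < q) (hq1 : q < 1) (a : ℂ) :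
    Tendsto (qPoch a q) atTop (𝓝 (qPochInf a q)) := by
  have := (multipliable_one_add_of_summable (summable_qPoch_factor hq0 hq1 a)).tendsto_prod_tprod_nat
  simp only [← sub_eq_add_neg] at this
  exact this

lemma qPochInf_ne_zero {q : ℝ} (hq0 : 0 < q) (hq1 : q < 1) {a : ℂ}
    (ha : ∀ j : ℕ, 1 - a * (q : ℂ) ^ j ≠ 0) : qPochInf a q ≠ 0 := by
  have := tprod_one_add_ne_zero_of_summable (f := fun j : ℕ => -(a * (q : ℂ) ^ j))
    (by simpa only [← sub_eq_add_neg] using ha) (summable_qPoch_factor hq0 hq1 a)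
  simp only [← sub_eq_add_neg] at this
  exact this

lemma qPochInf_self_ne_zero {q : ℝ} (hq0 : 0 < q) (hq1 : q < 1) :
    qPochInf (q : ℂ) q ≠ 0 :=
  qPochInf_ne_zero hq0 hq1 fun j => by
    rw [← pow_succ']; exact one_sub_pow_ne_zero hq0 hq1 j

lemma tendsto_inv_qPoch {q : ℝ} (hq0 : 0 < q) (hq1 : q < 1) :
    Tendsto (fun n => (qPoch (q : ℂ) q n)⁻¹) atTop (𝓝 (qPochInf (q : ℂ) q)⁻¹) :=
  (tendsto_qPoch hq0 hq1 q).inv₀ (qPochInf_self_ne_zero hq0 hq1)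

/-- `1/(q;q)_n` converges as `n → ∞`, so it is bounded. -/
lemma invPoch_bounded {q : ℝ} (hq0 : 0 < q) (hq1 : q < 1) :
    ∃ M : ℝ, 0 ≤ M ∧ ∀ N, ‖invPoch q N‖ ≤ M := by
  obtain ⟨M, hM⟩ := (tendsto_inv_qPoch hq0 hq1).norm.bddAbove_range
  have h0 : 0 ≤ M := (norm_nonneg _).trans (hM ⟨0, rfl⟩)
  refine ⟨M, h0, fun N => ?_⟩
  unfold invPoch
  split_ifs
  · exact hM ⟨N.toNat, rfl⟩
  · simpa using h0

lemma tendsto_invPoch {q : ℝ} (hq0 : 0 < q) (hq1 : q < 1) :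
    Tendsto (invPoch q) atTop (𝓝 (qPochInf (q : ℂ) q)⁻¹) := by
  have : Tendsto Int.toNat atTop atTop := by
    refine tendsto_atTop.2 fun n => ?_
    filter_upwards [eventually_ge_atTop (n : ℤ)] with N hN
    lia
  refine ((tendsto_inv_qPoch hq0 hq1).comp this).congr' ?_
  filter_upwards [eventually_ge_atTop 0] with N hN
  simp [invPoch, hN]

lemma tendsto_natCast_sub (N : ℤ) : Tendsto (fun n : ℕ => (n : ℤ) - N) atTop atTop :=
  tendsto_atTop_add_const_right _ (-N) tendsto_natCast_atTop_atTop

lemma tendsto_natCast_add (N : ℤ) : Tendsto (fun n : ℕ => (n : ℤ) + N) atTop atTop :=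
  tendsto_atTop_add_const_right _ N tendsto_natCast_atTop_atTop

/-- The Jacobi triple product identity. -/
lemma triple_product {q : ℝ} (hq0 : 0 < q) (hq1 : q < 1) {z : ℂ} (hz : z ≠ 0) :
    theta q z = qPochInf (q : ℂ) q * qPochInf (-z) q * qPochInf (-(q / z)) q := by
  obtain ⟨M, hM0, hM⟩ := invPoch_bounded hq0 hq1
  have hP := qPochInf_self_ne_zero hq0 hq1
  have h1 := tendsto_tsum_of_dominated_convergence (𝓕 := atTop)
    (f := fun (n : ℕ) (N : ℤ) => invPoch q (n + N) * invPoch q (n - N) * (thetaWt q N * z ^ N))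
    (g := fun N => (qPochInf (q : ℂ) q)⁻¹ * (qPochInf (q : ℂ) q)⁻¹ * (thetaWt q N * z ^ N))
    (bound := fun N => M * M * ‖thetaWt q N * z ^ N‖)
    ((summable_theta hq0 hq1 hz).norm.mul_left _)
    (fun N => (((tendsto_invPoch hq0 hq1).comp (tendsto_natCast_add N)).mul
      ((tendsto_invPoch hq0 hq1).comp (tendsto_natCast_sub N))).mul_const _)
    (Eventually.of_forall fun n N => by
      rw [norm_mul, norm_mul]
      gcongr
      · exact hM _
      · exact hM _)
  simp only [(finite_triple_product hq0 hq1 hz _ _).tsum_eq] at h1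
  have h2 : Tendsto (fun n : ℕ => n + n) atTop atTop :=
    tendsto_atTop_mono (fun n => Nat.le_add_left n n) tendsto_id
  have h3 := (((tendsto_qPoch hq0 hq1 (-z)).mul (tendsto_qPoch hq0 hq1 (-(q / z)))).div
    ((tendsto_qPoch hq0 hq1 q).comp h2) hP)
  have h4 := tendsto_nhds_unique h1 h3
  rw [tsum_mul_left] at h4
  change _ * theta q z = _ at h4
  field_simp at h4
  linear_combination h4

/-- Euler's expansion of `(-z;q)_∞`. -/
lemma euler_expansion {q : ℝ} (hq0 : 0 < q) (hq1 : q < 1) {z : ℂ} (hz : z ≠ 0) :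
    HasSum (fun n : ℕ => (qPoch (q : ℂ) q n)⁻¹ * (thetaWt q n * z ^ n)) (qPochInf (-z) q) := by
  obtain ⟨M, hM0, hM⟩ := invPoch_bounded hq0 hq1
  have hP := qPochInf_self_ne_zero hq0 hq1
  have h1 := tendsto_tsum_of_dominated_convergence (𝓕 := atTop)
    (f := fun (n : ℕ) (N : ℤ) =>
      invPoch q ((0 : ℕ) + N) * invPoch q (n - N) * (thetaWt q N * z ^ N))
    (g := fun N => invPoch q ((0 : ℕ) + N) * (qPochInf (q : ℂ) q)⁻¹ * (thetaWt q N * z ^ N))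
    (bound := fun N => M * M * ‖thetaWt q N * z ^ N‖)
    ((summable_theta hq0 hq1 hz).norm.mul_left _)
    (fun N => (tendsto_const_nhds.mul
      ((tendsto_invPoch hq0 hq1).comp (tendsto_natCast_sub N))).mul_const _)
    (Eventually.of_forall fun n N => by
      rw [norm_mul, norm_mul]
      gcongr
      · exact hM _
      · exact hM _)
  simp only [(finite_triple_product hq0 hq1 hz _ _).tsum_eq] at h1
  have h3 := ((tendsto_qPoch hq0 hq1 (-z)).mul_const (qPoch (-(q / z)) q 0)).div
    (tendsto_qPoch hq0 hq1 q) hP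
  have h4 := tendsto_nhds_unique h1 h3
  have hs : Summable fun N : ℤ => invPoch q N * (thetaWt q N * z ^ N) :=
    .of_norm_bounded ((summable_theta hq0 hq1 hz).norm.mul_left M) fun N => by
      rw [norm_mul]; gcongr; exact hM _
  have h5 : ∑' N : ℤ, invPoch q N * (thetaWt q N * z ^ N) = qPochInf (-z) q := by
    have : ∀ N : ℤ, invPoch q ((0 : ℕ) + N) * (qPochInf (q : ℂ) q)⁻¹ * (thetaWt q N * z ^ N)
        = (qPochInf (q : ℂ) q)⁻¹ * (invPoch q N * (thetaWt q N * z ^ N)) := fun N => by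
      rw [Nat.cast_zero, zero_add]; ring
    rw [tsum_congr this, tsum_mul_left] at h4
    simp only [qPoch, Finset.range_zero, Finset.prod_empty] at h4
    field_simp at h4
    simpa [mul_assoc] using h4
  -- the terms with negative index vanish
  have h6 := h5 ▸ hs.hasSum
  have h7 := (Function.Injective.hasSum_iff Nat.cast_injective (fun N hN => by
    have : ¬ 0 ≤ N := fun h => hN ⟨N.toNat, by simp [h]⟩
    simp [invPoch, this])).2 h6
  simpa [Function.comp_def, invPoch] using h7

/-! ### The kernel of the integral -/

/-- Quasi-periodicity of the theta function. -/
lemma theta_shift {q : ℝ} (hq0 : 0 < q) (m : ℤ) {y : ℂ} (hy : y ≠ 0) :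
    theta q ((q : ℂ) ^ m * y) = (thetaWt q m)⁻¹ * (y ^ m)⁻¹ * theta q y := by
  have h1 : theta q y = thetaWt q m * y ^ m * theta q ((q : ℂ) ^ m * y) := by
    unfold theta
    rw [← tsum_mul_left, ← (Equiv.addRight m).tsum_eq]
    refine tsum_congr fun N => ?_
    have := thetaWt_add hq0 N m
    simp only [thetaWt] at this ⊢
    rw [Equiv.coe_addRight, this, zpow_add₀ hy, mul_zpow]
    ring
  have := thetaWt_ne_zero hq0 m
  have := zpow_ne_zero m hy
  rw [h1]
  field_simp

lemma thetaWt_natCast_succ (q : ℝ) (n : ℕ) :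
    thetaWt q ((n : ℤ) + 1) = (q : ℂ) ^ (n * (n + 1) / 2) := by
  rw [thetaWt, ← zpow_natCast]
  congr 1
  push_cast
  congr 1
  ring

/-- In the kernel of the integral the factor `(s;q)_∞` of the theta function cancels, leaving an
entire function of `t = 1/s` times `t^m`. -/
lemma kernel_eq {q : ℝ} (hq0 : 0 < q) (hq1 : q < 1) (m : ℤ) {s t : ℂ} (hst : s * t = 1)
    (hs : ∀ j : ℕ, 1 - s * (q : ℂ) ^ j ≠ 0) :
    theta q (-((q : ℂ) ^ m * s)) / qPochInf s q =
      (-1) ^ m * qPochInf (q : ℂ) q * (thetaWt q m)⁻¹ * t ^ m * qPochInf (q * t) q := by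
  have hs0 : s ≠ 0 := left_ne_zero_of_mul_eq_one hst
  have ht : t = s⁻¹ := (inv_eq_of_mul_eq_one_right hst).symm
  have h1 : -((q : ℂ) ^ m * s) = (q : ℂ) ^ m * (-s) := by ring
  rw [h1, theta_shift hq0 m (neg_ne_zero.2 hs0), triple_product hq0 hq1 (neg_ne_zero.2 hs0), neg_neg,
    div_eq_iff (qPochInf_ne_zero hq0 hq1 hs), ht]
  have h2 : -((q : ℂ) / -s) = q * s⁻¹ := by field_simp
  have h3 : ((-s) ^ m)⁻¹ = (-1) ^ m * (s⁻¹) ^ m := by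
    rw [← inv_zpow, inv_neg, neg_eq_neg_one_mul, mul_zpow]
  rw [h2, h3]
  ring

/-- Euler's expansion of `(qt;q)_∞` in powers of `t`. -/
lemma hasSum_qPochInf_q_mul {q : ℝ} (hq0 : 0 < q) (hq1 : q < 1) {t : ℂ} (ht : t ≠ 0) :
    HasSum (fun n : ℕ => (q : ℂ) ^ (n * (n + 1) / 2) / qPoch (q : ℂ) q n * (-t) ^ n)
      (qPochInf (q * t) q) := by
  have hq' : (q : ℂ) ≠ 0 := by exact_mod_cast hq0.ne'
  have := euler_expansion hq0 hq1 (z := -(q * t)) (by simp [hq', ht])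
  rw [neg_neg] at this
  convert this using 1
  funext n
  rw [← thetaWt_natCast_succ, thetaWt_succ hq0, neg_mul_eq_mul_neg, mul_pow, zpow_natCast]
  ring

/-! ### Gamma integrals and term-by-term integration -/

lemma intgamma_integrable {a z : ℂ} (ha : 0 < a.re) (hz : 0 < z.re) :
    MeasureTheory.IntegrableOn (fun t : ℝ => (t : ℂ) ^ (a - 1) * Complex.exp (-(z * t)))
      (Set.Ioi 0) := by
  have h0 : MeasureTheory.IntegrableOn (fun t : ℝ => t ^ (a.re - 1) * Real.exp (-z.re * t))
      (Set.Ioi 0) := by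
    have := integrableOn_rpow_mul_exp_neg_mul_rpow (p := 1) (s := a.re - 1) (b := z.re)
      (by linarith) one_pos hz
    simpa using this
  refine MeasureTheory.Integrable.mono' h0 ?_ ?_
  · refine ContinuousOn.aestronglyMeasurable ?_ measurableSet_Ioi
    intro t ht
    refine ContinuousAt.continuousWithinAt ?_
    have : (t : ℂ) ∈ Complex.slitPlane := Complex.ofReal_mem_slitPlane.2 ht
    fun_prop (disch := assumption)
  · refine (MeasureTheory.ae_restrict_iff' measurableSet_Ioi).2 (Eventually.of_forall ?_)
    intro t ht
    rw [norm_mul, Complex.norm_cpow_eq_rpow_re_of_pos ht, Complex.norm_exp]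
    simp

/-- Differentiation under the integral sign, with the derivative dominated on the ball of radius
`Re z / 2` by `t^{Re a} e^{-(Re z / 2) t}`. -/
lemma intgamma_hasDerivAt {a z : ℂ} (ha : 0 < a.re) (hz : 0 < z.re) :
    HasDerivAt (fun z : ℂ => ∫ t : ℝ in Set.Ioi 0, (t : ℂ) ^ (a - 1) * Complex.exp (-(z * t)))
      (∫ t : ℝ in Set.Ioi 0, (t : ℂ) ^ (a - 1) * (Complex.exp (-(z * t)) * (-t))) z := by
  have h0 : MeasureTheory.IntegrableOn (fun t : ℝ => t ^ (a.re) * Real.exp (-(z.re / 2) * t))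
      (Set.Ioi 0) := by
    have := integrableOn_rpow_mul_exp_neg_mul_rpow (p := 1) (s := a.re) (b := z.re / 2)
      (by linarith) one_pos (by linarith)
    simpa using this
  refine (hasDerivAt_integral_of_dominated_loc_of_deriv_le
    (F := fun (z : ℂ) (t : ℝ) => (t : ℂ) ^ (a - 1) * Complex.exp (-(z * t)))
    (μ := MeasureTheory.volume.restrict (Set.Ioi 0))
    (s := Metric.ball z (z.re / 2))
    (F' := fun z t => (t : ℂ) ^ (a - 1) * (Complex.exp (-(z * t)) * (-t)))
    (Metric.ball_mem_nhds z (half_pos hz)) ?_ (intgamma_integrable ha hz) ?_ ?_ h0 ?_).2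
  · filter_upwards [(isOpen_lt continuous_const Complex.continuous_re).mem_nhds hz] with w hw
    exact (intgamma_integrable ha hw).1
  · refine ContinuousOn.aestronglyMeasurable ?_ measurableSet_Ioi
    intro t ht
    refine ContinuousAt.continuousWithinAt ?_
    have : (t : ℂ) ∈ Complex.slitPlane := Complex.ofReal_mem_slitPlane.2 ht
    fun_prop (disch := assumption)
  · refine (MeasureTheory.ae_restrict_iff' measurableSet_Ioi).2 (Eventually.of_forall ?_)
    intro t ht w hw
    have ht' : (0 : ℝ) < t := ht
    have hw' : z.re / 2 < w.re := by
      have h1 := (Complex.abs_re_le_norm (w - z)).trans_lt (mem_ball_iff_norm.1 hw)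
      rw [Complex.sub_re, abs_lt] at h1
      linarith [h1.1]
    rw [norm_mul, norm_mul, Complex.norm_cpow_eq_rpow_re_of_pos ht, Complex.norm_exp, norm_neg,
      Complex.norm_real, Real.norm_of_nonneg ht'.le]
    have e1 : t ^ (a - 1).re * (Real.exp (-(w * t)).re * t)
        = t ^ a.re * Real.exp (-(w.re) * t) := by
      have : t ^ a.re = t ^ (a - 1).re * t := by
        rw [← Real.rpow_add_one ht'.ne']; simp
      rw [this]
      simp
      ring
    rw [e1]
    gcongr
  · refine Eventually.of_forall fun t w _ => ?_
    have := (((hasDerivAt_id w).mul_const (t : ℂ)).neg.cexp).const_mul ((t : ℂ) ^ (a - 1))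
    simpa using this

/-- The Gamma integral with complex parameter `z`, `Re z > 0`: both sides are analytic in the right
half-plane and agree on the positive reals. -/
lemma intgamma_complex {a z : ℂ} (ha : 0 < a.re) (hz : 0 < z.re) :
    ∫ t : ℝ in Set.Ioi 0, (t : ℂ) ^ (a - 1) * Complex.exp (-(z * t)) =
      z ^ (-a) * Complex.Gamma a := by
  have hopen : IsOpen {z : ℂ | 0 < z.re} := isOpen_lt continuous_const Complex.continuous_re
  have hA : AnalyticOnNhd ℂ
      (fun z : ℂ => ∫ t : ℝ in Set.Ioi 0, (t : ℂ) ^ (a - 1) * Complex.exp (-(z * t)))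
      {z : ℂ | 0 < z.re} :=
    DifferentiableOn.analyticOnNhd (fun w hw =>
      (intgamma_hasDerivAt ha hw).differentiableAt.differentiableWithinAt) hopen
  have hB : AnalyticOnNhd ℂ (fun z : ℂ => z ^ (-a) * Complex.Gamma a) {z : ℂ | 0 < z.re} := by
    refine DifferentiableOn.analyticOnNhd (fun w hw => ?_) hopen
    have : w ∈ Complex.slitPlane := Or.inl hw
    refine DifferentiableAt.differentiableWithinAt ?_
    fun_prop (disch := assumption)
  have hconv : IsPreconnected {z : ℂ | 0 < z.re} :=
    (convex_halfSpace_re_gt 0).isPreconnected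
  refine hA.eqOn_of_preconnected_of_frequently_eq hB hconv (z₀ := 1) (by simp) ?_ hz
  -- the points `1 + 1 / (n + 1)` are positive reals accumulating at `1`
  have hlim : Tendsto (fun n : ℕ => ((1 + 1 / ((n : ℝ) + 1) : ℝ) : ℂ)) atTop (𝓝[≠] 1) := by
    refine tendsto_nhdsWithin_iff.2 ⟨?_, Eventually.of_forall fun n => ?_⟩
    · have h1 : Tendsto (fun n : ℕ => (1 + 1 / ((n : ℝ) + 1) : ℝ)) atTop (𝓝 (1 + 0)) :=
        tendsto_const_nhds.add tendsto_one_div_add_atTop_nhds_zero_nat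
      have := (Complex.continuous_ofReal.tendsto _).comp h1
      simpa [Function.comp_def] using this
    · have : (0 : ℝ) < 1 / ((n : ℝ) + 1) := by positivity
      intro h
      have h' : (1 + 1 / ((n : ℝ) + 1) : ℝ) = 1 := by
        exact Complex.ofReal_injective (by simpa using h)
      linarith
  refine hlim.frequently (Frequently.of_forall fun n => ?_)
  have hr : (0 : ℝ) < 1 + 1 / ((n : ℝ) + 1) := by positivity
  set r := 1 + 1 / ((n : ℝ) + 1)
  have := Complex.integral_cpow_mul_exp_neg_mul_Ioi ha hr
  refine this.trans ?_
  rw [one_div, Complex.inv_cpow _ _ (by rw [Complex.arg_ofReal_of_nonneg hr.le]; exact Real.pi_pos.ne), Complex.cpow_neg]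

/-- Term-by-term integration, including integrability of the sum. -/
lemma hasSum_integral_integrable {X : Type*} [MeasurableSpace X] {μ : MeasureTheory.Measure X}
    {f : ℕ → X → ℂ} {g : X → ℂ}
    (hf : ∀ n, MeasureTheory.Integrable (f n) μ)
    (hs : Summable fun n => ∫ x, ‖f n x‖ ∂μ)
    (hg : ∀ᵐ x ∂μ, HasSum (fun n => f n x) (g x)) :
    MeasureTheory.Integrable g μ ∧ HasSum (fun n => ∫ x, f n x ∂μ) (∫ x, g x ∂μ) := by
  have h2 : ∫ x, (∑' n, f n x) ∂μ = ∫ x, g x ∂μ :=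
    MeasureTheory.integral_congr_ae (hg.mono fun x hx => hx.tsum_eq)
  refine ⟨⟨?_, ?_⟩, h2 ▸ MeasureTheory.hasSum_integral_of_summable_integral_norm hf hs⟩
  · refine aestronglyMeasurable_of_tendsto_ae (u := atTop)
      (f := fun (n : ℕ) x => ∑ i ∈ Finset.range n, f i x) (fun n => ?_)
      (hg.mono fun x hx => hx.tendsto_sum_nat)
    exact Finset.aestronglyMeasurable_fun_sum _ fun i _ => (hf i).1
  · have hi (i : ℕ) : ∫⁻ a, ‖f i a‖ₑ ∂μ = ‖∫ a, ‖f i a‖ ∂μ‖ₑ := by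
      rw [← MeasureTheory.ofReal_integral_norm_eq_lintegral_enorm (hf i),
        Real.enorm_of_nonneg (MeasureTheory.integral_nonneg fun a => norm_nonneg _)]
    have hfin : ∑' i, ∫⁻ a, ‖f i a‖ₑ ∂μ < ⊤ := by
      rw [funext hi]
      exact (ENNReal.tsum_coe_ne_top_iff_summable.2 <| NNReal.summable_coe.1 hs.abs).lt_top
    refine lt_of_le_of_lt ?_ hfin
    rw [← MeasureTheory.lintegral_tsum fun i => (hf i).1.enorm]
    refine MeasureTheory.lintegral_mono_ae (hg.mono fun x hx => ?_)
    rw [← hx.tsum_eq]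
    exact enorm_tsum_le_tsum_enorm

/-! ### The terms of the series on the ray -/

lemma Gamma_add_natCast {a : ℂ} (ha : 0 < a.re) (n : ℕ) :
    Complex.Gamma (a + n) = poch a n * Complex.Gamma a := by
  induction n with
  | zero => simp [poch]
  | succ n ih =>
    have h : a + n ≠ 0 := fun h => by
      have := congrArg Complex.re h
      simp at this
      have : (0 : ℝ) ≤ n := n.cast_nonneg
      linarith
    rw [Nat.cast_succ, ← add_assoc, Complex.Gamma_add_one _ h, ih, poch, poch,
      Finset.prod_range_succ]
    ring

/-- The coefficient of `t^n` in Euler's expansion of `(qt;q)_∞`. -/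
noncomputable def eulerCoeff (q : ℝ) (n : ℕ) : ℂ :=
  (q : ℂ) ^ (n * (n + 1) / 2) / qPoch (q : ℂ) q n * (-1) ^ n

lemma eulerCoeff_succ {q : ℝ} (hq0 : 0 < q) (n : ℕ) :
    eulerCoeff q (n + 1) = eulerCoeff q n * (-((q ^ (n + 1) / (1 - q ^ (n + 1)) : ℝ) : ℂ)) := by
  unfold eulerCoeff
  rw [← thetaWt_natCast_succ, ← thetaWt_natCast_succ, Nat.cast_succ, thetaWt_succ hq0,
    qPoch_self_succ, pow_succ (-1 : ℂ)]
  have : (q : ℂ) ^ ((n : ℤ) + 1) = (q : ℂ) ^ (n + 1) := by norm_cast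
  rw [this]
  push_cast
  rw [← div_div]
  generalize 1 - (q : ℂ) ^ (n + 1) = D
  ring

/-- The ratio of consecutive terms is `q^{n+1} (σ+n) / (κ (1-q^{n+1}))`, which tends to `0`. -/
lemma summable_eulerCoeff_Gamma {q : ℝ} (hq0 : 0 < q) (hq1 : q < 1) {σ κ : ℝ} (hσ : 0 < σ)
    (hκ : 0 < κ) :
    Summable fun n : ℕ => ‖eulerCoeff q n‖ * ((1 / κ) ^ (σ + n) * Real.Gamma (σ + n)) := by
  refine summable_of_ratio_zero
    (c := fun n => q ^ (n + 1) / (1 - q ^ (n + 1)) * (1 / κ * (σ + n))) (fun n => ?_) ?_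
  · have h1 : 0 ≤ q ^ (n + 1) / (1 - q ^ (n + 1)) :=
      div_nonneg (by positivity) (sub_nonneg.2 (pow_le_one₀ hq0.le hq1.le))
    have h2 : 0 < σ + n := by positivity
    rw [eulerCoeff_succ hq0, norm_mul, norm_neg, Complex.norm_real, Real.norm_of_nonneg h1,
      Nat.cast_succ, ← add_assoc, Real.Gamma_add_one h2.ne', Real.rpow_add_one (by positivity)]
    ring
  · have h1 : Tendsto (fun n : ℕ => q ^ n) atTop (𝓝 0) :=
      tendsto_pow_atTop_nhds_zero_of_lt_one hq0.le hq1
    have h2 := tendsto_self_mul_const_pow_of_lt_one hq0.le hq1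
    have h3 : Tendsto (fun n : ℕ => 1 - q ^ (n + 1)) atTop (𝓝 (1 - 0)) :=
      tendsto_const_nhds.sub ((tendsto_add_atTop_iff_nat 1).2 h1)
    have h4 := (((h1.const_mul σ).add h2).const_mul (q / κ)).div h3 (by norm_num)
    simp only [mul_zero, add_zero, zero_div] at h4
    refine h4.congr fun n => ?_
    simp only [Pi.div_apply]
    ring

/-- Rotating the argument of `x^{-s}` by the angle `d` of the ray: `arg x + d ∈ (-π/2, π)`, so the
branch cut is not crossed and `Log (x e^{id}) = Log x + id`. -/
lemma cpow_rotate {x : ℂ} (hx : 0 < x.re) {d : ℝ} (hd0 : 0 < d) (hd : d < Real.pi / 2) (s : ℂ) :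
    (x * Complex.exp (Complex.I * d)) ^ (-s) * Complex.exp (Complex.I * d * s) = x ^ (-s) := by
  have hx0 : x ≠ 0 := fun h => by simp [h] at hx
  have harg := abs_lt.1 (Complex.abs_arg_lt_pi_div_two_iff.2 (Or.inl hx))
  have hlog : Complex.log (x * Complex.exp (Complex.I * d)) = Complex.log x + Complex.I * d := by
    nth_rewrite 1 [← Complex.exp_log hx0]
    rw [← Complex.exp_add, Complex.log_exp] <;>
      simp [Complex.log_im] <;> linarith [harg.1, harg.2]
  rw [Complex.cpow_def_of_ne_zero (mul_ne_zero hx0 (Complex.exp_ne_zero _)),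
    Complex.cpow_def_of_ne_zero hx0, hlog, ← Complex.exp_add]
  congr 1
  ring

/-- The factors of `(1/t;q)_∞` do not vanish on the ray, since `1/t` has argument `-d`. -/
lemma one_sub_ray_ne_zero {q : ℝ} (hq0 : 0 < q) {d : ℝ} (hd0 : 0 < d) (hd : d < Real.pi / 2)
    {r : ℝ} (hr : 0 < r) (j : ℕ) :
    1 - Complex.exp (-(Complex.I * d)) / (r : ℂ) * (q : ℂ) ^ j ≠ 0 := by
  intro h
  have h1 : Complex.exp (-(Complex.I * d)) = ((r / q ^ j : ℝ) : ℂ) := by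
    have hr' : (r : ℂ) ≠ 0 := by exact_mod_cast hr.ne'
    have hq' : (q : ℂ) ≠ 0 := by exact_mod_cast hq0.ne'
    push_cast
    field_simp at h ⊢
    linear_combination -h
  have h2 := congrArg Complex.im h1
  rw [Complex.exp_im, Complex.ofReal_im] at h2
  simp at h2
  exact (Real.sin_pos_of_pos_of_lt_pi hd0 (by linarith [Real.pi_pos])).ne' h2

/-- the Laplace integral of `θ(q,-q^m/t)/((1/t;q)_∞) e^{-xt} t^ν dt/t` over the
ray `t = r e^{id}` equals `(-1)^m (q;q)_∞ q^{-m(m-1)/2} Γ(m+ν) x^{-(m+ν)} G(m+ν;q,1/x)`. -/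
theorem stmt15 (q : ℝ) (hq0 : 0 < q) (hq1 : q < 1)
    (m : ℤ) (ν : ℂ) (hmν : 0 < ν.re + (m : ℝ))
    (d : ℝ) (hd0 : 0 < d) (hd : d < Real.pi / 2)
    (x : ℂ) (hx : 0 < x.re) (hxd : 0 < (x * Complex.exp (Complex.I * d)).re) :
    MeasureTheory.IntegrableOn
      (fun r : ℝ =>
        theta q (-((q : ℂ) ^ m * Complex.exp (-(Complex.I * d)) / (r : ℂ))) /
            qPochInf (Complex.exp (-(Complex.I * d)) / (r : ℂ)) (q : ℂ) *
          Complex.exp (-(x * (r : ℂ) * Complex.exp (Complex.I * d))) *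
          Complex.exp (ν * ((Real.log r : ℂ) + Complex.I * d)) / (r : ℂ))
      (Set.Ioi 0) ∧
    (∫ r in Set.Ioi (0 : ℝ),
        theta q (-((q : ℂ) ^ m * Complex.exp (-(Complex.I * d)) / (r : ℂ))) /
            qPochInf (Complex.exp (-(Complex.I * d)) / (r : ℂ)) (q : ℂ) *
          Complex.exp (-(x * (r : ℂ) * Complex.exp (Complex.I * d))) *
          Complex.exp (ν * ((Real.log r : ℂ) + Complex.I * d)) / (r : ℂ)) =
      (-1 : ℂ) ^ m * qPochInf (q : ℂ) (q : ℂ) * (q : ℂ) ^ (-(m * (m - 1) / 2)) *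
        Complex.Gamma ((m : ℂ) + ν) * x ^ (-((m : ℂ) + ν)) * G ((m : ℂ) + ν) q (1 / x) := by
  set a : ℂ := (m : ℂ) + ν with ha_def
  have hare : a.re = ν.re + m := by simp [ha_def, add_comm]
  have ha : 0 < a.re := hare ▸ hmν
  have han (n : ℕ) : 0 < (a + n).re := by simp; positivity
  have hx0 : x ≠ 0 := fun h => by simp [h] at hx
  set w : ℂ := x * Complex.exp (Complex.I * d) with hw
  set C : ℂ := (-1) ^ m * qPochInf (q : ℂ) q * (thetaWt q m)⁻¹ with hC
  -- `f n` is the `n`-th term of the integrand after Euler's expansion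
  let f : ℕ → ℝ → ℂ := fun n r => C * eulerCoeff q n * Complex.exp (Complex.I * d * (a + n)) *
    ((r : ℂ) ^ (a + n - 1) * Complex.exp (-(w * r)))
  have hf (n : ℕ) : MeasureTheory.IntegrableOn (f n) (Set.Ioi 0) :=
    (intgamma_integrable (han n) hxd).const_mul _
  have hfi (n : ℕ) : ∫ r in Set.Ioi (0 : ℝ), f n r = C * Complex.Gamma a * x ^ (-a) *
      (poch a n * (q : ℂ) ^ (n * (n + 1) / 2) / qPoch (q : ℂ) (q : ℂ) n * (-(1 / x)) ^ n) := by
    have h1 := cpow_rotate hx hd0 hd (a + n)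
    have h2 : x ^ (-(a + n)) = x ^ (-a) * (1 / x) ^ n := by
      rw [neg_add, Complex.cpow_add _ _ hx0, Complex.cpow_neg x n, Complex.cpow_natCast, one_div,
        inv_pow]
    rw [h2] at h1
    rw [MeasureTheory.integral_const_mul, intgamma_complex (han n) hxd, Gamma_add_natCast ha,
      eulerCoeff, neg_pow (1 / x)]
    linear_combination C * ((q : ℂ) ^ (n * (n + 1) / 2) / qPoch (q : ℂ) q n * (-1) ^ n) *
      (poch a n * Complex.Gamma a) * h1
  have hfn (n : ℕ) : ∫ r in Set.Ioi (0 : ℝ), ‖f n r‖ = ‖C‖ * ‖Complex.exp (Complex.I * d * a)‖ *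
      (‖eulerCoeff q n‖ * ((1 / w.re) ^ (a.re + n) * Real.Gamma (a.re + n))) := by
    rw [← Real.integral_rpow_mul_exp_neg_mul_Ioi (by positivity) hxd,
      ← MeasureTheory.integral_const_mul, ← MeasureTheory.integral_const_mul]
    refine MeasureTheory.setIntegral_congr_fun measurableSet_Ioi fun r hr => ?_
    simp only [f, norm_mul]
    rw [Complex.norm_cpow_eq_rpow_re_of_pos hr, Complex.norm_exp, Complex.norm_exp,
      Complex.norm_exp]
    simp
    ring
  have hfs : Summable fun n => ∫ r in Set.Ioi (0 : ℝ), ‖f n r‖ := by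
    simp only [hfn]
    exact (summable_eulerCoeff_Gamma hq0 hq1 ha hxd).mul_left _
  have hg : ∀ᵐ r : ℝ ∂(MeasureTheory.volume.restrict (Set.Ioi 0)), HasSum (fun n => f n r)
      (theta q (-((q : ℂ) ^ m * Complex.exp (-(Complex.I * d)) / (r : ℂ))) /
            qPochInf (Complex.exp (-(Complex.I * d)) / (r : ℂ)) (q : ℂ) *
          Complex.exp (-(x * (r : ℂ) * Complex.exp (Complex.I * d))) *
          Complex.exp (ν * ((Real.log r : ℂ) + Complex.I * d)) / (r : ℂ)) := by
    refine (MeasureTheory.ae_restrict_iff' measurableSet_Ioi).2 (Eventually.of_forall ?_)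
    intro r hr
    have hr0 : (0 : ℝ) < r := hr
    have hr' : (r : ℂ) ≠ 0 := by exact_mod_cast hr0.ne'
    have hlog : Complex.log r = (Real.log r : ℂ) := (Complex.ofReal_log hr0.le).symm
    set l : ℂ := (Real.log r : ℂ) with hl
    have hrl : (r : ℂ) = Complex.exp l := by rw [← hlog]; exact (Complex.exp_log hr').symm
    -- `t` is the point `r e^{id}` of the ray
    set t : ℂ := Complex.exp (l + Complex.I * d) with ht
    have hst : Complex.exp (-(Complex.I * d)) / (r : ℂ) * t = 1 := by
      rw [ht, Complex.exp_add, Complex.exp_neg, ← hrl]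
      field_simp
    rw [mul_div_assoc ((q : ℂ) ^ m), kernel_eq hq0 hq1 m hst (one_sub_ray_ne_zero hq0 hd0 hd hr0)]
    have h1 := (hasSum_qPochInf_q_mul hq0 hq1 (Complex.exp_ne_zero (l + Complex.I * d))).mul_left
      (C * t ^ m * Complex.exp (-(x * (r : ℂ) * Complex.exp (Complex.I * d))) *
        Complex.exp (ν * (l + Complex.I * d)) / (r : ℂ))
    convert! h1 using 1
    · funext n
      have h2 : Complex.exp (Complex.I * d * (a + n)) * (r : ℂ) ^ (a + n - 1)
          = t ^ m * t ^ n * Complex.exp (ν * (l + Complex.I * d)) / r := by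
        rw [Complex.cpow_def_of_ne_zero hr', hlog, hrl, ht, ← Complex.exp_int_mul,
          ← Complex.exp_nat_mul, ← Complex.exp_add, ← Complex.exp_add, ← Complex.exp_add,
          ← Complex.exp_sub, ha_def]
        congr 1
        ring
      have h3 : -(w * r) = -(x * (r : ℂ) * Complex.exp (Complex.I * d)) := by rw [hw]; ring
      simp only [f, eulerCoeff]
      rw [h3, neg_pow]
      linear_combination C * ((q : ℂ) ^ (n * (n + 1) / 2) / qPoch (q : ℂ) q n * (-1) ^ n) *
        Complex.exp (-(x * (r : ℂ) * Complex.exp (Complex.I * d))) * h2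
    · rw [← ht, hC]
      ring
  obtain ⟨hint, hsum⟩ := hasSum_integral_integrable hf hfs hg
  refine ⟨hint, ?_⟩
  rw [← hsum.tsum_eq]
  simp only [hfi]
  rw [tsum_mul_left, G, hC, thetaWt, zpow_neg]
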